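/- Fix an integer n ≥ 1. Let σ : ℂ[u, v, t] → ℂ[u, v, t][t^{-1}] be the ℂ-algebra homomorphism determined by σ(u) = t^{n+1} v^n + t^{n+2} u, σ(v) = t v, σ(t) = t^{-1} (the transition map between the two charts of the bundle Q over ℙ¹). Then the set of polynomials F ∈ ℂ[u, v, t] such that σ(F) lies in the image of ℂ[u, v, t] in the localization ℂ[u, v, t][t^{-1}] is exactly the ℂ-subalgebra of ℂ[u, v, t] generated by the n + 5 elements v, vt, u, ut, ut², …, u t^{n+1}, and u t^{n+2} − v^n t^{n+1}. (These elements generate the ring of regular functions 𝒪(Q).) -/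

import Mathlib

/-!
The subalgebra `S` on the right lies in the set on the left because `σ` sends each generator to a
polynomial; for `u t^(n+2) - v^n t^(n+1)` the poles cancel and the image is `u`.

For the converse, argue by induction on the degree of `F` in `u`. If that degree is `A`, the part of
`σ(F)` of degree `A` in `u` comes only from the part of `F` of degree `A` in `u`, on which it is
`u^A v^b t^c ↦ u^A v^b t^(A(n+2) + b - c)`. Hence, if `σ(F)` is a polynomial, every monomial
`u^A v^b t^c` of `F` satisfies `c ≤ A(n+2) + b` (`sigma_exponent_bound`). Each such monomial is the
leading part in `u` of a product of generators (`exists_mem_leading`), since the generators have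
leading parts `v`, `vt` and `u t^i` for `0 ≤ i ≤ n + 2`. Subtracting these products from `F` lowers
the degree in `u`.
-/


open MvPolynomial

noncomputable section

/-- The polynomial ring `ℂ[u, v, t]`, with `u = X 0`, `v = X 1`, `t = X 2`. -/
abbrev R3 : Type := MvPolynomial (Fin 3) ℂ

/-- The localization `ℂ[u, v, t][t⁻¹]` of `ℂ[u, v, t]` at `t`. -/
abbrev R3t : Type := Localization.Away (X 2 : R3)

/-- For fixed `n ≥ 1`, the ℂ-algebra homomorphism
`σ : ℂ[u, v, t] → ℂ[u, v, t][t⁻¹]` determined by `σ(u) = t^{n+1} v^n + t^{n+2} u`,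
`σ(v) = t v`, `σ(t) = t⁻¹` (the transition map between the two charts of the bundle `Q`
over `ℙ¹`). -/
def sigmaQ (n : ℕ) : R3 →ₐ[ℂ] R3t :=
  aeval ![algebraMap R3 R3t ((X 2) ^ (n + 1) * (X 1) ^ n + (X 2) ^ (n + 2) * X 0),
    algebraMap R3 R3t (X 2 * X 1),
    IsLocalization.Away.invSelf (S := R3t) (X 2 : R3)]

/-- The generators of the subalgebra in the theorem. -/
def gensQ (n : ℕ) : Set R3 :=
  ({X 1, X 2 * X 1, X 0 * (X 2) ^ (n + 2) - (X 1) ^ n * (X 2) ^ (n + 1)} : Set R3) ∪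
    {w : R3 | ∃ i ≤ n + 1, w = X 0 * (X 2) ^ i}

/-- `Low A p` says that `p` has degree less than `A` in `u`; the zero polynomial is `Low 0`. -/
def Low (A : ℕ) (p : R3) : Prop := ∀ e ∈ p.support, e 0 < A

lemma Low.mono {A B : ℕ} {p : R3} (h : Low A p) (hAB : A ≤ B) : Low B p :=
  fun e he => (h e he).trans_le hAB

lemma Low.add {A : ℕ} {p q : R3} (hp : Low A p) (hq : Low A q) : Low A (p + q) := by
  intro e he
  rcases Finset.mem_union.1 (support_add he) with h | h
  · exact hp e h
  · exact hq e h

lemma Low.neg {A : ℕ} {p : R3} (hp : Low A p) : Low A (-p) := by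
  intro e he
  exact hp e (by simpa using he)

lemma Low.mul {A B : ℕ} {p q : R3} (hp : Low A p) (hq : Low (B + 1) q) : Low (A + B) (p * q) := by
  intro e he
  obtain ⟨x, hx, y, hy, rfl⟩ := Finset.mem_add.1 (support_mul p q he)
  have h1 := hp x hx
  have h2 := hq y hy
  simp only [Finsupp.add_apply]
  omega

lemma Low.sum {ι : Type*} {A : ℕ} (s : Finset ι) (f : ι → R3) (h : ∀ i ∈ s, Low A (f i)) :
    Low A (∑ i ∈ s, f i) := by
  classical
  induction s using Finset.induction_on with
  | empty => intro e he; simp at he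
  | insert a s ha ih =>
    rw [Finset.sum_insert ha]
    exact (h a (Finset.mem_insert_self a s)).add
      (ih fun i hi => h i (Finset.mem_insert_of_mem hi))

lemma Low.coeff_eq_zero {A : ℕ} {p : R3} (hp : Low A p) {e : Fin 3 →₀ ℕ} (he : A ≤ e 0) :
    coeff e p = 0 := by
  by_contra h
  have := hp e (mem_support_iff.2 h)
  omega

/-- The exponent vector of `u^a v^b t^c`. -/
def expQ (a b c : ℕ) : Fin 3 →₀ ℕ := Finsupp.equivFunOnFinite.symm ![a, b, c]

lemma expQ_self (m : Fin 3 →₀ ℕ) : expQ (m 0) (m 1) (m 2) = m := by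
  ext i
  fin_cases i <;> simp [expQ]

lemma monomial_expQ (a b c : ℕ) :
    monomial (expQ a b c) (1 : ℂ) = X 0 ^ a * X 1 ^ b * X 2 ^ c := by
  rw [monomial_eq, Finsupp.prod_fintype _ _ (by simp), Fin.prod_univ_three]
  simp [expQ]

lemma low_monomial {A a b c : ℕ} (h : a < A) : Low A (X 0 ^ a * X 1 ^ b * X 2 ^ c : R3) := by
  rw [← monomial_expQ]
  intro e he
  have := Finset.mem_singleton.1 (support_monomial_subset he)
  simpa [this, expQ] using h

/-- Every monomial allowed by the exponent bound is the leading part in `u` of some element of the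
subalgebra. -/
lemma exists_mem_leading (n A b : ℕ) : ∀ c ≤ A * (n + 2) + b,
    ∃ g ∈ Algebra.adjoin ℂ (gensQ n), Low A (g - X 0 ^ A * X 1 ^ b * X 2 ^ c) := by
  induction A with
  | zero =>
    intro c hc
    refine ⟨X 1 ^ (b - c) * (X 2 * X 1) ^ c, ?_, ?_⟩
    · exact mul_mem (pow_mem (Algebra.subset_adjoin (by simp [gensQ])) _)
        (pow_mem (Algebra.subset_adjoin (by simp [gensQ])) _)
    · have : (X 1 ^ (b - c) * (X 2 * X 1) ^ c - X 0 ^ 0 * X 1 ^ b * X 2 ^ c : R3) = 0 := by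
        obtain ⟨k, rfl⟩ : ∃ k, b = k + c := ⟨b - c, by omega⟩
        rw [Nat.add_sub_cancel]
        ring
      rw [this]
      intro e he
      simp at he
  | succ A ih =>
    intro c hc
    -- split off one factor with leading part `u t^i`, taking `i` as large as possible
    obtain ⟨i, c', hi, rfl, hc'⟩ : ∃ i c', i ≤ n + 2 ∧ c = c' + i ∧ c' ≤ A * (n + 2) + b := by
      refine ⟨min c (n + 2), c - min c (n + 2), by omega, by omega, ?_⟩
      rw [Nat.succ_mul] at hc
      omega
    obtain ⟨w, hw, hwl⟩ : ∃ w ∈ Algebra.adjoin ℂ (gensQ n), Low 1 (w - X 0 * X 2 ^ i) := by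
      rcases Nat.lt_or_ge i (n + 2) with h | h
      · refine ⟨X 0 * X 2 ^ i, Algebra.subset_adjoin (Or.inr ⟨i, by omega, rfl⟩), ?_⟩
        intro e he
        simp at he
      · obtain rfl : i = n + 2 := by omega
        refine ⟨_, Algebra.subset_adjoin (Or.inl (Or.inr (Or.inr rfl))), ?_⟩
        have := (low_monomial (A := 1) (a := 0) (b := n) (c := n + 1) (by omega)).neg
        convert this using 1
        ring
    obtain ⟨g, hg, hgl⟩ := ih c' hc'
    refine ⟨g * w, mul_mem hg hw, ?_⟩
    have hu : Low 2 (X 0 * X 2 ^ i : R3) := by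
      simpa using low_monomial (A := 2) (a := 1) (b := 0) (c := i) (by omega)
    have hw2 : Low 2 w := by
      have := (hwl.mono (by omega : 1 ≤ 2)).add hu
      rwa [sub_add_cancel] at this
    have h1 := hgl.mul hw2
    have h2 : Low (A + 1) (_) := (add_comm 1 A) ▸
      hwl.mul (low_monomial (A := A + 1) (a := A) (b := b) (c := c') (by omega))
    convert h1.add h2 using 1
    ring

/-- The leading part in `u` of `t^k σ(u)^a σ(v)^b`. -/
lemma low_sigma_monomial (n a b k : ℕ) :
    Low a (X 2 ^ k * (X 2 ^ (n + 1) * X 1 ^ n + X 2 ^ (n + 2) * X 0) ^ a * (X 2 * X 1) ^ b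
      - X 0 ^ a * X 1 ^ b * X 2 ^ (k + a * (n + 2) + b) : R3) := by
  induction a with
  | zero =>
    intro e he
    have : (X 2 ^ k * (X 2 ^ (n + 1) * X 1 ^ n + X 2 ^ (n + 2) * X 0) ^ 0 * (X 2 * X 1) ^ b
      - X 0 ^ 0 * X 1 ^ b * X 2 ^ (k + 0 * (n + 2) + b) : R3) = 0 := by ring
    rw [this] at he
    simp at he
  | succ a ih =>
    have h0 : Low 1 (X 2 ^ (n + 1) * X 1 ^ n : R3) := by
      have := low_monomial (A := 1) (a := 0) (b := n) (c := n + 1) (by omega)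
      convert this using 1
      ring
    have h1 : Low 2 (X 2 ^ (n + 2) * X 0 : R3) := by
      have := low_monomial (A := 2) (a := 1) (b := 0) (c := n + 2) (by omega)
      convert this using 1
      ring
    have h2 := ih.mul ((h0.mono (by omega : 1 ≤ 2)).add h1)
    have h3 : Low (a + 1) (_) := (add_comm 1 a) ▸
      h0.mul (low_monomial (A := a + 1) (a := a) (b := b) (c := k + a * (n + 2) + b) (by omega))
    convert h2.add h3 using 1
    ring

lemma sigmaQ_monomial (n N : ℕ) (m : Fin 3 →₀ ℕ) (c : ℂ) (h : m 2 ≤ N) :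
    algebraMap R3 R3t (X 2 ^ N) * sigmaQ n (monomial m c) =
      algebraMap R3 R3t (C c * (X 2 ^ (N - m 2) *
        (X 2 ^ (n + 1) * X 1 ^ n + X 2 ^ (n + 2) * X 0) ^ m 0 * (X 2 * X 1) ^ m 1)) := by
  have hinv : algebraMap R3 R3t (X 2) * IsLocalization.Away.invSelf (S := R3t) (X 2 : R3) = 1 :=
    IsLocalization.Away.mul_invSelf _
  have hN : algebraMap R3 R3t (X 2 ^ N) * IsLocalization.Away.invSelf (S := R3t) (X 2 : R3) ^ m 2
      = algebraMap R3 R3t (X 2 ^ (N - m 2)) := by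
    obtain ⟨k, rfl⟩ : ∃ k, N = k + m 2 := ⟨N - m 2, by omega⟩
    rw [Nat.add_sub_cancel, pow_add, map_mul, mul_assoc, map_pow _ _ (m 2), ← mul_pow, hinv,
      one_pow, mul_one]
  have hC : algebraMap ℂ R3t c = algebraMap R3 R3t (C c) := by
    rw [IsScalarTower.algebraMap_apply ℂ R3 R3t]
    rfl
  rw [sigmaQ, aeval_monomial, Finsupp.prod_fintype _ _ (by simp), Fin.prod_univ_three, hC]
  simp only [Matrix.cons_val_zero, Matrix.cons_val_one, Matrix.cons_val]
  rw [map_mul _ (C c), map_mul _ (_ * _) ((X 2 * X 1) ^ m 1), map_mul _ (X 2 ^ (N - m 2)), ← hN,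
    map_pow _ _ (m 0), map_pow _ _ (m 1)]
  ring

/-- If `σ(F)` is a polynomial and `F` has degree at most `A` in `u`, then each monomial
`u^A v^b t^c` of `F` satisfies `c ≤ A(n+2) + b`. -/
lemma sigma_exponent_bound (n A : ℕ) (F G : R3) (hF : Low (A + 1) F)
    (hG : algebraMap R3 R3t G = sigmaQ n F) (m : Fin 3 →₀ ℕ) (hm : m ∈ F.support)
    (hmA : m 0 = A) : m 2 ≤ A * (n + 2) + m 1 := by
  classical
  set N := F.support.sup (fun m => m 2) with hNdef
  have hN : ∀ m ∈ F.support, m 2 ≤ N := fun m hm =>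
    Finset.le_sup (f := fun m : Fin 3 →₀ ℕ => m 2) hm
  set T : (Fin 3 →₀ ℕ) → R3 := fun m => X 2 ^ (N - m 2) *
        (X 2 ^ (n + 1) * X 1 ^ n + X 2 ^ (n + 2) * X 0) ^ m 0 * (X 2 * X 1) ^ m 1 with hT
  -- clear denominators: `t^N σ(F)` is an identity between polynomials
  have key : X 2 ^ N * G = ∑ m ∈ F.support, C (coeff m F) * T m := by
    have hinj : Function.Injective (algebraMap R3 R3t) :=
      IsLocalization.injective R3t (powers_le_nonZeroDivisors_of_noZeroDivisors (X_ne_zero 2))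
    apply hinj
    rw [map_mul, hG, map_sum]
    conv_lhs => rw [F.as_sum, map_sum, Finset.mul_sum]
    exact Finset.sum_congr rfl fun m hm => sigmaQ_monomial n N m _ (hN m hm)
  set e := expQ (m 0) (m 1) (N - m 2 + m 0 * (n + 2) + m 1) with he
  have hcoeff : coeff e (∑ m ∈ F.support, C (coeff m F) * T m) = coeff m F := by
    rw [coeff_sum, Finset.sum_eq_single m]
    · have h := (low_sigma_monomial n (m 0) (m 1) (N - m 2)).coeff_eq_zero (e := e)
        (by simp [he, expQ])
      rw [← monomial_expQ, coeff_sub, coeff_monomial, if_pos rfl, sub_eq_zero] at h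
      rw [coeff_C_mul, h, mul_one]
    · intro m' hm' hne
      have hle := hF m' hm'
      have h := (low_sigma_monomial n (m' 0) (m' 1) (N - m' 2)).coeff_eq_zero (e := e)
        (by simp [he, expQ]; omega)
      rw [← monomial_expQ, coeff_sub, coeff_monomial, if_neg, sub_zero] at h
      · rw [coeff_C_mul, h, mul_zero]
      · intro heq
        apply hne
        have e0 : m' 0 = m 0 := by simpa [he, expQ] using DFunLike.congr_fun heq 0
        have e1 : m' 1 = m 1 := by simpa [he, expQ] using DFunLike.congr_fun heq 1
        have e2 : N - m' 2 + m' 0 * (n + 2) + m' 1 = N - m 2 + m 0 * (n + 2) + m 1 := by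
          simpa [he, expQ] using DFunLike.congr_fun heq 2
        have := hN m hm
        have := hN m' hm'
        rw [e0, e1] at e2
        rw [← expQ_self m, ← expQ_self m', e0, e1, show m' 2 = m 2 by omega]
    · intro h
      exact absurd hm h
  have hpow : (X 2 ^ N : R3) = monomial (Finsupp.single 2 N) 1 := X_pow_eq_monomial
  rw [← key, hpow, coeff_monomial_mul'] at hcoeff
  have hle : Finsupp.single 2 N ≤ e := by
    by_contra h
    rw [if_neg h] at hcoeff
    exact mem_support_iff.1 hm hcoeff.symm
  have h2 := hle 2
  simp only [he, expQ, Finsupp.single_eq_same, Finsupp.equivFunOnFinite_symm_apply_apply,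
    Matrix.cons_val] at h2
  have := hN m hm
  rw [hmA] at h2
  omega

/-- The polynomials sent by `σ` to polynomials, as a subalgebra. -/
def regQ (n : ℕ) : Subalgebra ℂ R3 := (IsScalarTower.toAlgHom ℂ R3 R3t).range.comap (sigmaQ n)

lemma mem_regQ {n : ℕ} {F : R3} : F ∈ regQ n ↔ ∃ G : R3, algebraMap R3 R3t G = sigmaQ n F := by
  simp [regQ]

lemma adjoin_le_regQ (n : ℕ) : Algebra.adjoin ℂ (gensQ n) ≤ regQ n := by
  have hinv : algebraMap R3 R3t (X 2) * IsLocalization.Away.invSelf (S := R3t) (X 2 : R3) = 1 :=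
    IsLocalization.Away.mul_invSelf _
  have s0 : sigmaQ n (X 0) =
      algebraMap R3 R3t ((X 2) ^ (n + 1) * (X 1) ^ n + (X 2) ^ (n + 2) * X 0) := by simp [sigmaQ]
  have s1 : sigmaQ n (X 1) = algebraMap R3 R3t (X 2 * X 1) := by simp [sigmaQ]
  have s2 : sigmaQ n (X 2) = IsLocalization.Away.invSelf (S := R3t) (X 2 : R3) := by simp [sigmaQ]
  have hp (i : ℕ) : algebraMap R3 R3t (X 2) ^ i *
      IsLocalization.Away.invSelf (S := R3t) (X 2 : R3) ^ i = 1 := by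
    rw [← mul_pow, hinv, one_pow]
  rw [Algebra.adjoin_le_iff]
  rintro w ((rfl | rfl | rfl) | ⟨i, hi, rfl⟩) <;> rw [SetLike.mem_coe, mem_regQ]
  · exact ⟨_, s1.symm⟩
  · refine ⟨X 1, ?_⟩
    rw [map_mul, s1, s2, map_mul]
    linear_combination (-algebraMap R3 R3t (X 1)) * hinv
  · refine ⟨X 0, ?_⟩
    simp only [map_mul, map_sub, map_pow, map_add, s0, s1, s2]
    have h1 := hp (n + 1)
    have h2 := hp (n + 2)
    generalize IsLocalization.Away.invSelf (S := R3t) (X 2 : R3) = y at *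
    generalize algebraMap R3 R3t (X 2) = t at *
    linear_combination (-algebraMap R3 R3t (X 0)) * h2 -
      t ^ n * y ^ (n + 1) * algebraMap R3 R3t (X 1) ^ n * hinv
  · obtain ⟨k, hk⟩ : ∃ k, n + 1 = k + i := ⟨n + 1 - i, by omega⟩
    refine ⟨X 2 ^ k * X 1 ^ n + X 2 ^ (k + 1) * X 0, ?_⟩
    rw [show n + 2 = k + i + 1 by omega, hk] at s0
    simp only [map_mul, map_pow, map_add, s0, s2]
    have h1 := hp i
    generalize IsLocalization.Away.invSelf (S := R3t) (X 2 : R3) = y at *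
    generalize algebraMap R3 R3t (X 2) = t at *
    linear_combination (-(t ^ k * algebraMap R3 R3t (X 1) ^ n
      + t ^ (k + 1) * algebraMap R3 R3t (X 0))) * h1

/-- The induction on the degree in `u`: the leading part of `F` is cancelled by elements of the
subalgebra, which leaves a polynomial of lower degree that `σ` still sends to a polynomial. -/
lemma mem_adjoin_of_low (n A : ℕ) : ∀ F : R3, Low A F → F ∈ regQ n →
    F ∈ Algebra.adjoin ℂ (gensQ n) := by
  classical
  induction A with
  | zero =>
    intro F hF _
    have : F = 0 := by
      ext e
      simpa using hF.coeff_eq_zero (e := e) (by omega)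
    rw [this]
    exact zero_mem _
  | succ A ih =>
    intro F hF hreg
    obtain ⟨G, hG⟩ := mem_regQ.1 hreg
    have hb := sigma_exponent_bound n A F G hF hG
    have hex : ∀ m : Fin 3 →₀ ℕ, ∃ g : R3, m ∈ F.support → m 0 = A →
        g ∈ Algebra.adjoin ℂ (gensQ n) ∧ Low A (g - monomial m 1) := by
      intro m
      by_cases h : m ∈ F.support ∧ m 0 = A
      · obtain ⟨g, hg, hl⟩ := exists_mem_leading n A (m 1) (m 2) (hb m h.1 h.2)
        refine ⟨g, fun _ _ => ⟨hg, ?_⟩⟩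
        rw [← monomial_expQ, ← h.2, expQ_self] at hl
        rwa [← h.2]
      · exact ⟨0, fun h1 h2 => absurd ⟨h1, h2⟩ h⟩
    choose g hg using hex
    set s := F.support.filter (fun m => m 0 = A) with hs
    set P : R3 := ∑ m ∈ s, C (coeff m F) * g m with hP
    have hPmem : P ∈ Algebra.adjoin ℂ (gensQ n) := by
      refine sum_mem fun m hm => ?_
      obtain ⟨h1, h2⟩ := Finset.mem_filter.1 hm
      rw [← smul_eq_C_mul]
      exact Subalgebra.smul_mem _ (hg m h1 h2).1 _
    have hlow : Low A (F - P) := by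
      have h1 : Low A (∑ m ∈ s, C (coeff m F) * (g m - monomial m 1)) := by
        refine Low.sum _ _ fun m hm => ?_
        obtain ⟨h1, h2⟩ := Finset.mem_filter.1 hm
        intro e he
        refine (hg m h1 h2).2 e ?_
        rw [mem_support_iff] at he ⊢
        rw [coeff_C_mul] at he
        exact right_ne_zero_of_mul he
      have h2 : Low A (∑ m ∈ F.support.filter (fun m => ¬ m 0 = A), monomial m (coeff m F)) := by
        refine Low.sum _ _ fun m hm => ?_
        obtain ⟨h1, h2⟩ := Finset.mem_filter.1 hm
        intro e he
        rw [Finset.mem_singleton.1 (support_monomial_subset he)]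
        have := hF m h1
        omega
      have h3 : F = ∑ m ∈ s, monomial m (coeff m F) +
          ∑ m ∈ F.support.filter (fun m => ¬ m 0 = A), monomial m (coeff m F) := by
        rw [Finset.sum_filter_add_sum_filter_not]
        exact F.as_sum
      have h4 : ∑ m ∈ s, C (coeff m F) * (g m - monomial m 1) =
          P - ∑ m ∈ s, monomial m (coeff m F) := by
        rw [hP, ← Finset.sum_sub_distrib]
        refine Finset.sum_congr rfl fun m _ => ?_
        rw [mul_sub, C_mul_monomial, mul_one]
      have h5 := h2.add h1.neg
      rw [h4] at h5
      convert h5 using 1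
      linear_combination h3
    have := ih (F - P) hlow (sub_mem hreg (adjoin_le_regQ n hPmem))
    simpa using add_mem this hPmem

/-- For `n ≥ 1`, the set of polynomials `F ∈ ℂ[u, v, t]` such that `σ(F)`
lies in the image of `ℂ[u, v, t]` in `ℂ[u, v, t][t⁻¹]` is exactly the ℂ-subalgebra of
`ℂ[u, v, t]` generated by the `n + 5` elements `v`, `vt`, `u`, `ut`, `ut²`, …, `ut^{n+1}`,
and `ut^{n+2} − v^n t^{n+1}`. -/
theorem stmt13 (n : ℕ) (hn : 1 ≤ n) :
    {F : R3 | ∃ G : R3, algebraMap R3 R3t G = sigmaQ n F} =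
      ↑(Algebra.adjoin ℂ
        (({X 1, X 2 * X 1, X 0 * (X 2) ^ (n + 2) - (X 1) ^ n * (X 2) ^ (n + 1)} :
            Set R3) ∪
          {w : R3 | ∃ i ≤ n + 1, w = X 0 * (X 2) ^ i})) := by
  ext F
  rw [Set.mem_ofPred_eq, ← mem_regQ]
  refine ⟨fun h => ?_, fun h => adjoin_le_regQ n h⟩
  refine mem_adjoin_of_low n (F.support.sup (fun m => m 0) + 1) F (fun e he => ?_) h
  exact Nat.lt_succ_of_le (Finset.le_sup (f := fun m : Fin 3 →₀ ℕ => m 0) he)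

end
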